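/- arXiv:2503.16754 — 6 statements merged into one kernel-verified Lean document; each statement's English description precedes it below -/
import Mathlib

section
/- Consider one Consensus ALADIN iteration with constant matrices for the consensus problem. Suppose each f_i is differentiable and strictly convex, (z*, λ*) is a KKT point, and the input dual variables satisfy Σ_i λ_i = 0. Then the energy function does not increase, L(z⁺, λ⁺) ≤ L(z, λ); moreover, if x_j⁺ ≠ z* for at least one index j, the inequality is strict: L(z⁺, λ⁺) < L(z, λ). -/
open Matrix Finset

/-!
Put `ξ i = x i⁺ - z*` and `γ i = g i + λ i*`. Since the dual errors sum to zero at both iterates,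
the cross terms `⟨λ i - λ i*, z - z*⟩` may be added to the energy freely, which completes the
square: the energy equals `∑ i, ‖λ i - λ i* ± B i (z - z*)‖²` in the norms of `(B i)⁻¹`, for either
sign. Since `λ i - B i z = -(B i x i⁺ + g i)` and `λ i⁺ + B i z⁺ = B i x i⁺ - g i`, one iteration
takes the energy from `∑ i, ‖B i ξ i + γ i‖²` to `∑ i, ‖B i ξ i - γ i‖²`, a drop of exactly
`4 ∑ i, ⟨γ i, ξ i⟩`. Here `g i` and `-λ i*` are subgradients of `f i` at `x i⁺` and `z*`, so each
summand is nonnegative by monotonicity of the subdifferential.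
-/

section Subgradient

variable {E : Type*} [AddCommGroup E] [Module ℝ E] {f h : E → ℝ} {s : Set E} {x y : E}
  {φ ψ : Module.Dual ℝ E}

/-- The linear functional `φ` is a subgradient at `x` of the function equal to `f` on `s` and to
`+∞` elsewhere; this encodes local constraints without extended real values. -/
def IsSubgradientOn (f : E → ℝ) (s : Set E) (φ : Module.Dual ℝ E) (x : E) : Prop :=
  ∀ y ∈ s, f x + φ (y - x) ≤ f y

namespace IsSubgradientOn

theorem sub_apply_sub_nonneg (hφ : IsSubgradientOn f s φ x) (hψ : IsSubgradientOn f s ψ y)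
    (hx : x ∈ s) (hy : y ∈ s) : 0 ≤ (φ - ψ) (x - y) := by
  have hxy := hφ y hy
  have hyx := hψ x hx
  simp only [LinearMap.sub_apply, map_sub] at hxy hyx ⊢
  linarith

theorem lt_of_strictConvexOn (hφ : IsSubgradientOn f s φ x) (hf : StrictConvexOn ℝ s f)
    (hx : x ∈ s) (hy : y ∈ s) (hxy : x ≠ y) : f x + φ (y - x) < f y := by
  have hhalf : (0 : ℝ) < 1 / 2 := one_half_pos
  have hmid := hφ _ (hf.1 hx hy hhalf.le hhalf.le (add_halves 1))
  have hstrict := hf.2 hx hy hxy hhalf hhalf (add_halves 1)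
  simp only [map_sub, map_add, map_smul, smul_eq_mul] at hmid hstrict ⊢
  linarith

theorem sub_apply_sub_pos (hφ : IsSubgradientOn f s φ x) (hψ : IsSubgradientOn f s ψ y)
    (hf : StrictConvexOn ℝ s f) (hx : x ∈ s) (hy : y ∈ s) (hxy : x ≠ y) :
    0 < (φ - ψ) (x - y) := by
  have hlt := hφ.lt_of_strictConvexOn hf hx hy hxy
  have hyx := hψ x hx
  simp only [LinearMap.sub_apply, map_sub] at hlt hyx ⊢
  linarith

variable [TopologicalSpace E] [ContinuousAdd E] [ContinuousSMul ℝ E]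

theorem neg_of_isLocalMinOn_add (hf : ConvexOn ℝ s f) (hx : x ∈ s)
    (hmin : IsLocalMinOn (fun w ↦ f w + h w) s x)
    (hh : ∀ v, HasLineDerivAt ℝ h (φ v) x v) : IsSubgradientOn f s (-φ) x := by
  intro y hy
  let chord : ℝ → ℝ := fun t ↦ (f x + t * (f y - f x)) + h (x + t • (y - x))
  have hderiv : HasDerivAt chord (f y - f x + φ (y - x)) 0 := by
    have hlin := ((hasDerivAt_id (0 : ℝ)).mul_const (f y - f x)).const_add (f x)
    rw [one_mul] at hlin
    exact hlin.add (hh (y - x))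
  have hsegment : IsLocalMinOn ((fun w ↦ f w + h w) ∘ fun t : ℝ ↦ x + t • (y - x))
      (Set.Icc 0 1) 0 := by
    refine IsLocalMinOn.comp_continuousOn (t := s) (by simpa using hmin)
      (fun t ht ↦ hf.1.add_smul_sub_mem hx hy ht) ?_ (by simp)
    fun_prop
  have hchord : IsLocalMinOn chord (Set.Icc 0 1) 0 := by
    filter_upwards [hsegment, self_mem_nhdsWithin] with t hle ht
    have hconv := hf.2 hx hy (sub_nonneg.2 ht.2) ht.1 (sub_add_cancel 1 t)
    rw [show (1 - t) • x + t • y = x + t • (y - x) by module] at hconv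
    simp only [Function.comp_apply, zero_smul, add_zero, smul_eq_mul, chord] at hle hconv ⊢
    linarith
  have hcone : (1 : ℝ) ∈ posTangentConeAt (Set.Icc 0 1) (0 : ℝ) :=
    mem_posTangentConeAt_of_segment_subset (by simp [segment_eq_Icc])
  have hnonneg :=
    hchord.hasFDerivWithinAt_nonneg hderiv.hasFDerivAt.hasFDerivWithinAt hcone
  simp only [ContinuousLinearMap.toSpanSingleton_apply, one_smul] at hnonneg
  rw [LinearMap.neg_apply]
  linarith

-- `f + (-f)` is constant, so every point minimizes it.
theorem of_hasLineDerivAt (hf : ConvexOn ℝ s f) (hx : x ∈ s)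
    (hφ : ∀ v, HasLineDerivAt ℝ f (φ v) x v) : IsSubgradientOn f s φ x := by
  have hmin : IsLocalMinOn (fun w ↦ f w + -f w) s x := by
    simp only [add_neg_cancel]
    exact isMinOn_const.localize
  simpa only [neg_neg] using
    neg_of_isLocalMinOn_add (φ := -φ) hf hx hmin fun v ↦ (hφ v).neg

end IsSubgradientOn

end Subgradient

section WeightedNorm

variable {m R : Type*} [Fintype m] [CommRing R] {B : Matrix m m R}

/-- The squared weighted norm `‖v‖²_A = vᵀ A v`, as a plain quadratic form: `A` is an arbitrary
square matrix. -/
def weightedNormSq (A : Matrix m m R) (v : m → R) : R :=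
  v ⬝ᵥ (A *ᵥ v)

theorem weightedNormSq_neg (A : Matrix m m R) (v : m → R) :
    weightedNormSq A (-v) = weightedNormSq A v := by
  simp only [weightedNormSq, mulVec_neg, neg_dotProduct_neg]

theorem weightedNormSq_add (hB : B.IsSymm) (v w : m → R) :
    weightedNormSq B (v + w) =
      weightedNormSq B v + weightedNormSq B w + 2 * (v ⬝ᵥ (B *ᵥ w)) := by
  have hcomm : w ⬝ᵥ (B *ᵥ v) = v ⬝ᵥ (B *ᵥ w) := by
    rw [← dotProduct_transpose_mulVec, hB.eq]
  simp only [weightedNormSq, mulVec_add, dotProduct_add, add_dotProduct, hcomm]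
  ring

variable [DecidableEq m]

theorem weightedNormSq_inv_add_mulVec (hB : B.IsSymm) (hBu : IsUnit B) (v w : m → R) :
    weightedNormSq B⁻¹ (v + B *ᵥ w) =
      weightedNormSq B⁻¹ v + weightedNormSq B w + 2 * (v ⬝ᵥ w) := by
  have hinv : B⁻¹ *ᵥ (B *ᵥ w) = w := by
    rw [mulVec_mulVec, nonsing_inv_mul B ((isUnit_iff_isUnit_det B).1 hBu), one_mulVec]
  have hBinv : B⁻¹.IsSymm := by rw [IsSymm, transpose_nonsing_inv, hB.eq]
  rw [weightedNormSq_add hBinv, hinv, weightedNormSq, weightedNormSq, weightedNormSq, hinv,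
    dotProduct_comm (B *ᵥ w)]

end WeightedNorm

section DotProduct

variable {m : Type*} [Fintype m] {B : Matrix m m ℝ}

theorem hasLineDerivAt_dotProduct_add_weightedNormSq (hB : B.IsSymm) (l z x v : m → ℝ) :
    HasLineDerivAt ℝ (fun w ↦ l ⬝ᵥ w + 1 / 2 * weightedNormSq B (w - z))
      ((l + B *ᵥ (x - z)) ⬝ᵥ v) x v := by
  have hexpand (t : ℝ) : l ⬝ᵥ (x + t • v) + 1 / 2 * weightedNormSq B (x + t • v - z) =
      (l ⬝ᵥ x + 1 / 2 * weightedNormSq B (x - z)) +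
        (t * ((l + B *ᵥ (x - z)) ⬝ᵥ v) + t ^ 2 * (1 / 2 * weightedNormSq B v)) := by
    rw [show x + t • v - z = t • v + (x - z) by abel, weightedNormSq_add hB]
    simp only [weightedNormSq, mulVec_smul, dotProduct_add, add_dotProduct, dotProduct_smul,
      smul_dotProduct, smul_eq_mul, dotProduct_comm (B *ᵥ (x - z)) v]
    ring
  simp only [HasLineDerivAt, hexpand]
  have hlin := (hasDerivAt_id (0 : ℝ)).mul_const ((l + B *ᵥ (x - z)) ⬝ᵥ v)
  have hquad := (hasDerivAt_pow 2 (0 : ℝ)).mul_const (1 / 2 * weightedNormSq B v)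
  exact ((hlin.add hquad).const_add _).congr_deriv (by simp)

theorem IsSubgradientOn.of_isLocalMinOn_proximal [DecidableEq m] {f : (m → ℝ) → ℝ}
    {s : Set (m → ℝ)} {l x z : m → ℝ} (hB : B.IsSymm) (hf : ConvexOn ℝ s f) (hx : x ∈ s)
    (hmin : IsLocalMinOn (fun w ↦ f w + l ⬝ᵥ w + 1 / 2 * weightedNormSq B (w - z)) s x) :
    IsSubgradientOn f s (dotProductEquiv ℝ m (B *ᵥ (z - x) - l)) x := by
  have hneg : B *ᵥ (z - x) - l = -(l + B *ᵥ (x - z)) := by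
    rw [← neg_sub x z, mulVec_neg]
    abel
  rw [hneg, map_neg]
  simp only [add_assoc] at hmin
  exact neg_of_isLocalMinOn_add hf hx hmin fun v ↦
    hasLineDerivAt_dotProduct_add_weightedNormSq hB l z x v

theorem IsSubgradientOn.of_fderiv_eq_dotProduct [DecidableEq m] {f : (m → ℝ) → ℝ}
    {s : Set (m → ℝ)} {x γ : m → ℝ} (hf : ConvexOn ℝ s f) (hx : x ∈ s)
    (hd : DifferentiableAt ℝ f x) (hγ : ∀ v, fderiv ℝ f x v = γ ⬝ᵥ v) :
    IsSubgradientOn f s (dotProductEquiv ℝ m γ) x := by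
  refine of_hasLineDerivAt hf hx fun v ↦ ?_
  rw [dotProductEquiv_apply_apply, ← hγ]
  exact hd.hasFDerivAt.hasLineDerivAt v

end DotProduct

section Energy

variable {ι m R : Type*} [Fintype ι] [Fintype m] [DecidableEq m] [CommRing R]
  {B : ι → Matrix m m R}

/-- The energy `∑ i, (‖l i - ls i‖²_{(B i)⁻¹} + ‖z - zs‖²_{B i})` of the primal-dual pair `(z, l)`
relative to the reference pair `(zs, ls)`. -/
noncomputable def aladinEnergy (B : ι → Matrix m m R) (zs : m → R) (ls : ι → m → R) (z : m → R)
    (l : ι → m → R) : R :=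
  ∑ i, (weightedNormSq (B i)⁻¹ (l i - ls i) + weightedNormSq (B i) (z - zs))

theorem aladinEnergy_swap_primal (zs z : m → R) (ls l : ι → m → R) :
    aladinEnergy B z ls zs l = aladinEnergy B zs ls z l := by
  simp only [aladinEnergy, ← neg_sub z zs, weightedNormSq_neg]

theorem aladinEnergy_eq_sum_weightedNormSq (hB : ∀ i, (B i).IsSymm) (hBu : ∀ i, IsUnit (B i))
    (zs z : m → R) {ls l : ι → m → R} (hl : ∑ i, (l i - ls i) = 0) :
    aladinEnergy B zs ls z l =
      ∑ i, weightedNormSq (B i)⁻¹ (l i - ls i + B i *ᵥ (z - zs)) := by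
  have hcross : ∑ i, (l i - ls i) ⬝ᵥ (z - zs) = 0 := by
    rw [← sum_dotProduct, hl, zero_dotProduct]
  simp only [weightedNormSq_inv_add_mulVec (hB _) (hBu _), aladinEnergy]
  rw [sum_add_distrib (g := fun i ↦ 2 * _), ← mul_sum, hcross, mul_zero, add_zero]

theorem aladinEnergy_sub_aladinEnergy (hB : ∀ i, (B i).IsSymm) (hBu : ∀ i, IsUnit (B i))
    {zs z zp : m → R} {ls l lp x g : ι → m → R}
    (hl : ∑ i, (l i - ls i) = 0) (hlp : ∑ i, (lp i - ls i) = 0)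
    (hg : ∀ i, g i = B i *ᵥ (z - x i) - l i) (hlp_eq : ∀ i, lp i = B i *ᵥ (x i - zp) - g i) :
    aladinEnergy B zs ls z l - aladinEnergy B zs ls zp lp =
      4 * ∑ i, (g i + ls i) ⬝ᵥ (x i - zs) := by
  have hbefore (i : ι) :
      l i - ls i + B i *ᵥ (zs - z) = -((g i + ls i) + B i *ᵥ (x i - zs)) := by
    simp only [hg, mulVec_sub]
    abel
  have hafter (i : ι) :
      lp i - ls i + B i *ᵥ (zp - zs) = -(g i + ls i) + B i *ᵥ (x i - zs) := by
    simp only [hlp_eq, mulVec_sub]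
    abel
  rw [← aladinEnergy_swap_primal zs z, aladinEnergy_eq_sum_weightedNormSq hB hBu z zs hl,
    aladinEnergy_eq_sum_weightedNormSq hB hBu zs zp hlp, ← sum_sub_distrib, mul_sum]
  refine sum_congr rfl fun i _ ↦ ?_
  rw [hbefore, hafter, weightedNormSq_neg, weightedNormSq_inv_add_mulVec (hB i) (hBu i),
    weightedNormSq_inv_add_mulVec (hB i) (hBu i), weightedNormSq_neg, neg_dotProduct]
  ring

theorem sum_dual_update_eq_zero (hS : IsUnit (∑ i, B i)) {zp : m → R} {lp x g : ι → m → R}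
    (hzp : zp = (∑ i, B i)⁻¹ *ᵥ ∑ i, (B i *ᵥ x i - g i))
    (hlp : ∀ i, lp i = B i *ᵥ (x i - zp) - g i) : ∑ i, lp i = 0 := by
  have hnormal : ∑ i, B i *ᵥ zp = ∑ i, (B i *ᵥ x i - g i) := by
    rw [← sum_mulVec, hzp, mulVec_mulVec,
      mul_nonsing_inv _ ((isUnit_iff_isUnit_det _).1 hS), one_mulVec]
  simp only [hlp, mulVec_sub, sub_right_comm _ (B _ *ᵥ zp)]
  rw [sum_sub_distrib, hnormal, sub_self]

end Energy

theorem stmt_0_general {ι m : Type*} [Fintype ι] [Fintype m] [DecidableEq m]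
    {f : ι → (m → ℝ) → ℝ} {s : ι → Set (m → ℝ)} (hconv : ∀ i, ConvexOn ℝ (s i) (f i))
    {B : ι → Matrix m m ℝ} (hB : ∀ i, (B i).IsSymm) (hBu : ∀ i, IsUnit (B i))
    (hS : IsUnit (∑ i, B i))
    {zstar : m → ℝ} {lamstar : ι → m → ℝ} (hzstar : ∀ i, zstar ∈ s i)
    (hKKT1 : ∀ i, IsSubgradientOn (f i) (s i) (dotProductEquiv ℝ m (-lamstar i)) zstar)
    (hKKT2 : ∑ i, lamstar i = 0)
    {z : m → ℝ} {lam : ι → m → ℝ} (hlam : ∑ i, lam i = 0)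
    {xp : ι → m → ℝ} (hxp_mem : ∀ i, xp i ∈ s i)
    (hxp : ∀ i, IsLocalMinOn
      (fun x ↦ f i x + lam i ⬝ᵥ x + 1 / 2 * weightedNormSq (B i) (x - z)) (s i) (xp i))
    {g : ι → m → ℝ} (hg : ∀ i, g i = B i *ᵥ (z - xp i) - lam i)
    {zp : m → ℝ} (hzp : zp = (∑ i, B i)⁻¹ *ᵥ ∑ i, (B i *ᵥ xp i - g i))
    {lamp : ι → m → ℝ} (hlamp : ∀ i, lamp i = B i *ᵥ (xp i - zp) - g i) :
    aladinEnergy B zstar lamstar zp lamp ≤ aladinEnergy B zstar lamstar z lam ∧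
      ((∃ j, StrictConvexOn ℝ (s j) (f j) ∧ xp j ≠ zstar) →
        aladinEnergy B zstar lamstar zp lamp < aladinEnergy B zstar lamstar z lam) := by
  have hsub (i : ι) : IsSubgradientOn (f i) (s i) (dotProductEquiv ℝ m (g i)) (xp i) :=
    hg i ▸ .of_isLocalMinOn_proximal (hB i) (hconv i) (hxp_mem i) (hxp i)
  have hpair (i : ι) : (dotProductEquiv ℝ m (g i) - dotProductEquiv ℝ m (-lamstar i))
      (xp i - zstar) = (g i + lamstar i) ⬝ᵥ (xp i - zstar) := by
    rw [← map_sub, sub_neg_eq_add, dotProductEquiv_apply_apply]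
  have hnonneg (i : ι) : 0 ≤ (g i + lamstar i) ⬝ᵥ (xp i - zstar) :=
    hpair i ▸ (hsub i).sub_apply_sub_nonneg (hKKT1 i) (hxp_mem i) (hzstar i)
  have hdrop : aladinEnergy B zstar lamstar z lam - aladinEnergy B zstar lamstar zp lamp =
      4 * ∑ i, (g i + lamstar i) ⬝ᵥ (xp i - zstar) :=
    aladinEnergy_sub_aladinEnergy hB hBu (by rw [sum_sub_distrib, hlam, hKKT2, sub_zero])
      (by rw [sum_sub_distrib, sum_dual_update_eq_zero hS hzp hlamp, hKKT2, sub_zero]) hg hlamp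
  refine ⟨?_, fun ⟨j, hfj, hj⟩ ↦ ?_⟩
  · linarith [sum_nonneg fun i (_ : i ∈ univ) ↦ hnonneg i]
  · have hpos : 0 < (g j + lamstar j) ⬝ᵥ (xp j - zstar) :=
      hpair j ▸ (hsub j).sub_apply_sub_pos (hKKT1 j) hfj (hxp_mem j) (hzstar j) hj
    linarith [sum_pos' (fun i (_ : i ∈ univ) ↦ hnonneg i) ⟨j, mem_univ j, hpos⟩]

/-- One Consensus ALADIN iteration with constant matrices for the
consensus problem `min Σᵢ fᵢ(xᵢ) s.t. xᵢ = z`: if each `fᵢ` is differentiable and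
strictly convex, `(z*, λ*)` is a KKT point, and the input duals satisfy `Σᵢ λᵢ = 0`,
then the energy function `L` does not increase: `L(z⁺, λ⁺) ≤ L(z, λ)`; moreover if
`xⱼ⁺ ≠ z*` for some `j`, the inequality is strict. -/
theorem stmt_0 {n N : ℕ} (hN : 0 < N)
    (f : Fin N → (Fin n → ℝ) → ℝ)
    (gradf : Fin N → (Fin n → ℝ) → (Fin n → ℝ))
    (hdiff : ∀ i, Differentiable ℝ (f i))
    (hgrad : ∀ i x y, fderiv ℝ (f i) x y = gradf i x ⬝ᵥ y)
    (hconv : ∀ i, StrictConvexOn ℝ Set.univ (f i))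
    (B : Fin N → Matrix (Fin n) (Fin n) ℝ)
    (hB : ∀ i, (B i).PosDef)
    -- KKT point (z*, λ*)
    (zstar : Fin n → ℝ) (lamstar : Fin N → Fin n → ℝ)
    (hKKT1 : ∀ i, gradf i zstar + lamstar i = 0)
    (hKKT2 : ∑ i, lamstar i = 0)
    -- energy function
    (L : (Fin n → ℝ) → (Fin N → Fin n → ℝ) → ℝ)
    (hL : ∀ w μ, L w μ = ∑ i, ((μ i - lamstar i) ⬝ᵥ ((B i)⁻¹ *ᵥ (μ i - lamstar i))
        + (w - zstar) ⬝ᵥ ((B i) *ᵥ (w - zstar))))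
    -- current iterate (z, λ) with Σᵢ λᵢ = 0
    (z : Fin n → ℝ) (lam : Fin N → Fin n → ℝ)
    (hlam : ∑ i, lam i = 0)
    -- the iteration: xᵢ⁺ is a global minimizer of the local subproblem
    (xp : Fin N → Fin n → ℝ)
    (hxp : ∀ i x, f i (xp i) + lam i ⬝ᵥ xp i
          + (1 / 2 : ℝ) * ((xp i - z) ⬝ᵥ ((B i) *ᵥ (xp i - z)))
        ≤ f i x + lam i ⬝ᵥ x + (1 / 2 : ℝ) * ((x - z) ⬝ᵥ ((B i) *ᵥ (x - z))))
    -- gradient recovery, global update and dual update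
    (g : Fin N → Fin n → ℝ)
    (hg : ∀ i, g i = (B i) *ᵥ (z - xp i) - lam i)
    (zp : Fin n → ℝ)
    (hzp : zp = (∑ i, B i)⁻¹ *ᵥ (∑ i, ((B i) *ᵥ xp i - g i)))
    (lamp : Fin N → Fin n → ℝ)
    (hlamp : ∀ i, lamp i = (B i) *ᵥ (xp i - zp) - g i) :
    L zp lamp ≤ L z lam ∧ ((∃ j, xp j ≠ zstar) → L zp lamp < L z lam) := by
  obtain rfl : L = aladinEnergy B zstar lamstar := funext₂ hL
  have hS : (∑ i, B i).PosDef := posDef_sum ⟨⟨0, hN⟩, mem_univ _⟩ fun i _ ↦ hB i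
  have hsub (i : Fin N) :
      IsSubgradientOn (f i) Set.univ (dotProductEquiv ℝ (Fin n) (-lamstar i)) zstar :=
    eq_neg_of_add_eq_zero_left (hKKT1 i) ▸ .of_fderiv_eq_dotProduct (hconv i).convexOn
      (Set.mem_univ _) (hdiff i zstar) (hgrad i zstar)
  exact (stmt_0_general (fun i ↦ (hconv i).convexOn) (fun i ↦ (hB i).isHermitian)
    (fun i ↦ (hB i).isUnit) hS.isUnit (fun _ ↦ Set.mem_univ _) hsub hKKT2 hlam
    (fun _ ↦ Set.mem_univ _) (fun i ↦ IsMinOn.localize fun x _ ↦ hxp i x) hg hzp hlamp).imp_right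
    fun hlt ⟨j, hj⟩ ↦ hlt ⟨j, hconv j, hj⟩
end

section
/- Let B_1, …, B_N be symmetric positive definite n×n matrices and let x_i⁺, λ_i, λ_i⁺, λ_i*, z, z⁺, z* ∈ ℝⁿ satisfy: x_i⁺ = ½ B_i⁻¹(λ_i⁺ − λ_i) + ½(z + z⁺) for each i, and Σ_i λ_i = 0, Σ_i λ_i⁺ = 0, Σ_i λ_i* = 0. Then Σ_{i=1}^N (λ_i − λ_i* + B_i(x_i⁺ − z))ᵀ(x_i⁺ − z*) = ¼ Σ_{i=1}^N (‖λ_i⁺ − λ_i*‖²_{B_i⁻¹} − ‖λ_i − λ_i*‖²_{B_i⁻¹}) + ¼ Σ_{i=1}^N (‖z⁺ − z*‖²_{B_i} − ‖z − z*‖²_{B_i}). -/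
open Matrix Finset

/-!
Put `a = B⁻¹ (λ⁺ - λ*) + (z⁺ - z*)` and `b = B⁻¹ (λ - λ*) - (z - z*)`. The update rule says
`2 (x⁺ - z*) = a - b`, and it gives `2 (λ - λ* + B (x⁺ - z)) = B (a + b)`. Four times the summand of
one agent is therefore the difference of squares `‖a‖²_B - ‖b‖²_B`. Expanding both squares produces
the required norms and cross terms `2 (λ⁺ - λ*)ᵀ(z⁺ - z*) + 2 (λ - λ*)ᵀ(z - z*)`; as `z`, `z⁺` and
`z*` are common to all agents and the multipliers have equal sums, these cancel in the sum over the
agents.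
-/

theorem dotProduct_mulVec_comm_of_isSymm {R m : Type*} [CommSemiring R] [Fintype m]
    {A : Matrix m m R} (hA : A.IsSymm) (v w : m → R) : v ⬝ᵥ (A *ᵥ w) = w ⬝ᵥ (A *ᵥ v) := by
  rw [← dotProduct_transpose_mulVec, hA.eq]

section CommRing

variable {R m : Type*} [CommRing R] [Fintype m] {A : Matrix m m R}

theorem mulVec_add_dotProduct_sub_of_isSymm (hA : A.IsSymm) (v w : m → R) :
    (A *ᵥ (v + w)) ⬝ᵥ (v - w) = v ⬝ᵥ (A *ᵥ v) - w ⬝ᵥ (A *ᵥ w) := by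
  rw [dotProduct_comm]
  simp only [mulVec_add, dotProduct_add, sub_dotProduct]
  rw [dotProduct_mulVec_comm_of_isSymm hA v w]
  ring

variable [DecidableEq m]

theorem mulVec_inv_mulVec_of_isUnit (hA : IsUnit A) (v : m → R) : A *ᵥ (A⁻¹ *ᵥ v) = v := by
  rw [mulVec_mulVec, mul_nonsing_inv A ((isUnit_iff_isUnit_det A).mp hA), one_mulVec]

theorem dotProduct_mulVec_self_inv_mulVec_add (hA : A.IsSymm) (hAu : IsUnit A) (v w : m → R) :
    (A⁻¹ *ᵥ v + w) ⬝ᵥ (A *ᵥ (A⁻¹ *ᵥ v + w)) =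
      v ⬝ᵥ (A⁻¹ *ᵥ v) + 2 * (v ⬝ᵥ w) + w ⬝ᵥ (A *ᵥ w) := by
  have cross : (A⁻¹ *ᵥ v) ⬝ᵥ (A *ᵥ w) = v ⬝ᵥ w := by
    rw [dotProduct_mulVec_comm_of_isSymm hA, mulVec_inv_mulVec_of_isUnit hAu, dotProduct_comm]
  simp only [mulVec_add, mulVec_inv_mulVec_of_isUnit hAu, add_dotProduct, dotProduct_add, cross]
  rw [dotProduct_comm (A⁻¹ *ᵥ v) v, dotProduct_comm w v]
  ring

-- To be applied with `μ = λ - λ*`, `ν = λ⁺ - λ*`, `u = z - z*`, `v = z⁺ - z*`, `y = x⁺ - z*`.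
theorem four_mul_add_mulVec_sub_dotProduct (hA : A.IsSymm) (hAu : IsUnit A) {y μ ν u v : m → R}
    (hy : 2 • y = A⁻¹ *ᵥ (ν - μ) + (u + v)) :
    4 * ((μ + A *ᵥ (y - u)) ⬝ᵥ y) =
      (ν ⬝ᵥ (A⁻¹ *ᵥ ν) - μ ⬝ᵥ (A⁻¹ *ᵥ μ)) + (v ⬝ᵥ (A *ᵥ v) - u ⬝ᵥ (A *ᵥ u)) +
        2 * (μ ⬝ᵥ u + ν ⬝ᵥ v) := by
  set a := A⁻¹ *ᵥ ν + v with ha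
  set b := A⁻¹ *ᵥ μ + -u with hb
  have two_smul_right : 2 • y = a - b := by
    rw [hy, ha, hb, mulVec_sub]
    abel
  have two_smul_left : 2 • (μ + A *ᵥ (y - u)) = A *ᵥ (a + b) := by
    have : a + b = 2 • (A⁻¹ *ᵥ μ) + 2 • y - 2 • u := by
      rw [two_smul_right, hb]
      abel
    simp only [this, two_nsmul, mulVec_add, mulVec_sub, mulVec_inv_mulVec_of_isUnit hAu]
    abel
  calc 4 * ((μ + A *ᵥ (y - u)) ⬝ᵥ y)
      = (2 • (μ + A *ᵥ (y - u))) ⬝ᵥ (2 • y) := by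
        simp only [two_nsmul, add_dotProduct, dotProduct_add]
        ring
    _ = a ⬝ᵥ (A *ᵥ a) - b ⬝ᵥ (A *ᵥ b) := by
        rw [two_smul_left, two_smul_right, mulVec_add_dotProduct_sub_of_isSymm hA]
    _ = _ := by
        rw [dotProduct_mulVec_self_inv_mulVec_add hA hAu,
          dotProduct_mulVec_self_inv_mulVec_add hA hAu]
        simp only [mulVec_neg, dotProduct_neg, neg_dotProduct]
        ring

end CommRing

theorem sum_sub_dotProduct_eq_zero {R ι m : Type*} [NonUnitalNonAssocRing R] [Fintype m]
    {s : Finset ι} {f g : ι → m → R} (h : ∑ i ∈ s, f i = ∑ i ∈ s, g i) (w : m → R) :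
    ∑ i ∈ s, (f i - g i) ⬝ᵥ w = 0 := by
  rw [← sum_dotProduct, sum_sub_distrib, h, sub_self, zero_dotProduct]

-- Clearing the factors `1 / 2` and `1 / 4` makes the identity valid over every commutative ring.
theorem stmt_4_general {R ι m : Type*} [CommRing R] [Fintype ι] [Fintype m] [DecidableEq m]
    {B : ι → Matrix m m R} (hB : ∀ i, (B i).IsSymm) (hBu : ∀ i, IsUnit (B i))
    {xp lam lamp lamstar : ι → m → R} {z zp : m → R} (zstar : m → R)
    (hx : ∀ i, 2 • xp i = (B i)⁻¹ *ᵥ (lamp i - lam i) + (z + zp))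
    (hlam : ∑ i, lam i = ∑ i, lamstar i) (hlamp : ∑ i, lamp i = ∑ i, lamstar i) :
    4 * ∑ i, ((lam i - lamstar i + B i *ᵥ (xp i - z)) ⬝ᵥ (xp i - zstar)) =
      ∑ i, ((lamp i - lamstar i) ⬝ᵥ ((B i)⁻¹ *ᵥ (lamp i - lamstar i))
          - (lam i - lamstar i) ⬝ᵥ ((B i)⁻¹ *ᵥ (lam i - lamstar i)))
        + ∑ i, ((zp - zstar) ⬝ᵥ (B i *ᵥ (zp - zstar))
          - (z - zstar) ⬝ᵥ (B i *ᵥ (z - zstar))) := by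
  have hx_centered (i : ι) : 2 • (xp i - zstar) =
      (B i)⁻¹ *ᵥ ((lamp i - lamstar i) - (lam i - lamstar i)) +
        ((z - zstar) + (zp - zstar)) := by
    rw [smul_sub, hx i, sub_sub_sub_cancel_right]
    abel
  have summand (i : ι) := four_mul_add_mulVec_sub_dotProduct (hB i) (hBu i) (hx_centered i)
  simp only [sub_sub_sub_cancel_right] at summand
  rw [mul_sum, sum_congr rfl fun i _ => summand i]
  simp only [sum_add_distrib, ← mul_sum, sum_sub_dotProduct_eq_zero hlam,
    sum_sub_dotProduct_eq_zero hlamp, add_zero, mul_zero]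

/-- Let `B₁, …, B_N` be symmetric positive definite matrices and suppose
`xᵢ⁺ = ½ Bᵢ⁻¹(λᵢ⁺ − λᵢ) + ½(z + z⁺)` for each `i`, with `Σᵢ λᵢ = Σᵢ λᵢ⁺ = Σᵢ λᵢ* = 0`. Then
`Σᵢ (λᵢ − λᵢ* + Bᵢ(xᵢ⁺ − z))ᵀ(xᵢ⁺ − z*)
  = ¼ Σᵢ (‖λᵢ⁺ − λᵢ*‖²_{Bᵢ⁻¹} − ‖λᵢ − λᵢ*‖²_{Bᵢ⁻¹}) + ¼ Σᵢ (‖z⁺ − z*‖²_{Bᵢ} − ‖z − z*‖²_{Bᵢ})`. -/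
theorem stmt_4 {n N : ℕ} (hN : 0 < N)
    (B : Fin N → Matrix (Fin n) (Fin n) ℝ)
    (hB : ∀ i, (B i).PosDef)
    (xp lam lamp lamstar : Fin N → Fin n → ℝ)
    (z zp zstar : Fin n → ℝ)
    (hx : ∀ i, xp i = (1 / 2 : ℝ) • ((B i)⁻¹ *ᵥ (lamp i - lam i)) + (1 / 2 : ℝ) • (z + zp))
    (h1 : ∑ i, lam i = 0) (h2 : ∑ i, lamp i = 0) (h3 : ∑ i, lamstar i = 0) :
    ∑ i, ((lam i - lamstar i + (B i) *ᵥ (xp i - z)) ⬝ᵥ (xp i - zstar))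
      = (1 / 4 : ℝ) * ∑ i, ((lamp i - lamstar i) ⬝ᵥ ((B i)⁻¹ *ᵥ (lamp i - lamstar i))
          - (lam i - lamstar i) ⬝ᵥ ((B i)⁻¹ *ᵥ (lam i - lamstar i)))
        + (1 / 4 : ℝ) * ∑ i, ((zp - zstar) ⬝ᵥ ((B i) *ᵥ (zp - zstar))
          - (z - zstar) ⬝ᵥ ((B i) *ᵥ (z - zstar))) := by
  have two_smul_xp (i : Fin N) : 2 • xp i = (B i)⁻¹ *ᵥ (lamp i - lam i) + (z + zp) := by
    rw [hx i]; module
  linarith [stmt_4_general (fun i => isHermitian_iff_isSymm.mp (hB i).isHermitian)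
    (fun i => (hB i).isUnit) zstar two_smul_xp (h1.trans h3.symm) (h2.trans h3.symm)]
end

section
/- Let f : ℝⁿ → ℝ be differentiable and m-strongly convex with m > 0, B a symmetric positive definite n×n matrix, and λ, z ∈ ℝⁿ. If x⁺ is the global minimizer of x ↦ f(x) + λᵀx + ½‖x − z‖²_B, then for every y ∈ ℝⁿ, f(x⁺) − f(y) ≤ (λ + B(x⁺ − z))ᵀ(y − x⁺) − (m/2)‖x⁺ − y‖². -/
open Matrix

/-! At a minimizer of `f + g` the directional derivatives of `f` and `g` cancel, so the first-order
lower bound expressing the strong convexity of `f` at the minimizer can be written in terms of the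
derivative of `g`. Here `g` is the linear term plus half the square of the `B`-distance to `z`. -/

section LineDeriv

variable {𝕜 E F : Type*} [NontriviallyNormedField 𝕜] [AddCommGroup E] [Module 𝕜 E]
  [NormedAddCommGroup F] [NormedSpace 𝕜 F]

lemma hasLineDerivAt_linearMap (ℓ : E →ₗ[𝕜] F) (x v : E) : HasLineDerivAt 𝕜 ℓ (ℓ v) x v := by
  simpa [HasLineDerivAt] using ((hasDerivAt_id (0 : 𝕜)).smul_const (ℓ v)).const_add (ℓ x)

lemma hasLineDerivAt_bilinMap_sub_sub (b : LinearMap.BilinMap 𝕜 E F) (x z v : E) :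
    HasLineDerivAt 𝕜 (fun u ↦ b (u - z) (u - z)) (b (x - z) v + b v (x - z)) x v := by
  simpa only [HasLineDerivAt, LinearMap.BilinMap.toQuadraticMap_apply,
    LinearMap.BilinMap.polar_toQuadraticMap, add_sub_right_comm]
    using b.toQuadraticMap.hasLineDerivAt (x - z) v

end LineDeriv

lemma toBilin'_apply_eq_mulVec_dotProduct {R n : Type*} [CommSemiring R] [Fintype n]
    [DecidableEq n] {B : Matrix n n R} (hB : B.IsSymm) (u v : n → R) :
    B.toBilin' u v = (B *ᵥ u) ⬝ᵥ v := by
  rw [toBilin'_apply', dotProduct_mulVec, ← mulVec_transpose, hB.eq]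

theorem stmt_10_general {E : Type*} [AddCommGroup E] [Module ℝ E] [TopologicalSpace E]
    [ContinuousAdd E] [ContinuousSMul ℝ E] {f f' φ : E → ℝ} {x z : E} (ℓ : E →ₗ[ℝ] ℝ)
    {b : LinearMap.BilinForm ℝ E} (hb : b.IsSymm)
    (hf : ∀ v, HasLineDerivAt ℝ f (f' v) x v)
    (hconv : ∀ y, f x + f' (y - x) + φ (y - x) ≤ f y)
    (hmin : IsLocalMin (fun u ↦ f u + ℓ u + (1 / 2 : ℝ) * b (u - z) (u - z)) x) (y : E) :
    f x - f y ≤ (ℓ + b (x - z)) (y - x) - φ (y - x) := by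
  have hstationary : f' (y - x) + ℓ (y - x)
      + (1 / 2 : ℝ) * (b (x - z) (y - x) + b (y - x) (x - z)) = 0 :=
    IsLocalExtr.hasLineDerivAt_eq_zero hmin.isExtr <|
      ((hf (y - x)).add (hasLineDerivAt_linearMap ℓ x (y - x))).add
        ((hasLineDerivAt_bilinMap_sub_sub b x z (y - x)).const_mul (1 / 2 : ℝ))
  rw [hb.eq (y - x) (x - z)] at hstationary
  rw [LinearMap.add_apply]
  linarith [hconv y]

/-- Let `f : ℝⁿ → ℝ` be differentiable and `m`-strongly convex (`m > 0`),
`B` symmetric positive definite, and `λ, z ∈ ℝⁿ`. If `x⁺` is the global minimizer of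
`x ↦ f(x) + λᵀx + ½‖x − z‖²_B`, then for every `y`,
`f(x⁺) − f(y) ≤ (λ + B(x⁺ − z))ᵀ(y − x⁺) − (m/2)‖x⁺ − y‖²`. -/
theorem stmt_10 {n : ℕ} (m : ℝ) (hm : 0 < m)
    (f : (Fin n → ℝ) → ℝ) (gradf : (Fin n → ℝ) → (Fin n → ℝ))
    (hdiff : Differentiable ℝ f)
    (hgrad : ∀ x y, fderiv ℝ f x y = gradf x ⬝ᵥ y)
    -- m-strong convexity: f(y) ≥ f(x) + ∇f(x)ᵀ(y − x) + (m/2)‖y − x‖²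
    (hsc : ∀ x y, f x + gradf x ⬝ᵥ (y - x) + m / 2 * ((y - x) ⬝ᵥ (y - x)) ≤ f y)
    (B : Matrix (Fin n) (Fin n) ℝ) (hB : B.PosDef)
    (lam z xp : Fin n → ℝ)
    (hxp : ∀ x, f xp + lam ⬝ᵥ xp + (1 / 2 : ℝ) * ((xp - z) ⬝ᵥ (B *ᵥ (xp - z)))
        ≤ f x + lam ⬝ᵥ x + (1 / 2 : ℝ) * ((x - z) ⬝ᵥ (B *ᵥ (x - z)))) :
    ∀ y, f xp - f y ≤ (lam + B *ᵥ (xp - z)) ⬝ᵥ (y - xp)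
        - m / 2 * ((xp - y) ⬝ᵥ (xp - y)) := by
  intro y
  have hsymm : B.IsSymm := isHermitian_iff_isSymm.1 hB.isHermitian
  have hf (v) : HasLineDerivAt ℝ f (gradf xp ⬝ᵥ v) xp v :=
    hgrad xp v ▸ (hdiff xp).hasFDerivAt.hasLineDerivAt v
  have hmin : IsLocalMin (fun u ↦ f u + dotProductBilin ℝ ℝ lam u
      + (1 / 2 : ℝ) * B.toBilin' (u - z) (u - z)) xp :=
    .of_forall fun u ↦ by simpa only [toBilin'_apply', dotProductBilin_apply_apply] using hxp u
  have h := stmt_10_general (φ := fun v ↦ m / 2 * (v ⬝ᵥ v)) _ (isSymm_toBilin'_iff_isSymm.2 hsymm)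
    hf (hsc xp) hmin y
  rw [LinearMap.add_apply, toBilin'_apply_eq_mulVec_dotProduct hsymm] at h
  rwa [← neg_sub y xp, neg_dotProduct_neg, add_dotProduct]
end

section
/- Let f : ℝⁿ → ℝ be differentiable, and let ρ > 0, σ > 0 be such that the function x ↦ f(x) + (ρ/2)‖x‖² is σ-strongly convex. Let z, z*, λ, λ* ∈ ℝⁿ satisfy ∇f(z*) + λ* = 0, and let x⁺ be the global minimizer of x ↦ f(x) + λᵀx + (ρ/2)‖x − z‖². Then ‖x⁺ − z*‖ ≤ (ρ/σ)‖z − z*‖ + (1/σ)‖λ − λ*‖. -/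
open scoped RealInnerProductSpace

/-!
Expanding the square, the local subproblem minimizes `F + ⟪λ - ρ z, ·⟫`, where
`F x = f x + (ρ/2)‖x‖²`, up to an additive constant; by stationarity and convexity, `z*` minimizes
`F + ⟪λ* - ρ z*, ·⟫`. Since `F` is `σ`-strongly convex, a minimizer of a linear perturbation
`F + ⟪a, ·⟫` is a `1/σ`-Lipschitz function of `a`: add the quadratic growth inequalities at the two
minimizers and apply Cauchy–Schwarz.
-/

section NormedSpace

open Filter Topology

variable {E : Type*} [NormedAddCommGroup E] [NormedSpace ℝ E]

-- Convexity along the segment from `u` to `v`, divided by its parameter `t`, as `t → 0`.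
theorem add_modulus_le_of_isMinOn_of_uniformConvexOn {K : Set E} {φ : ℝ → ℝ} {h : E → ℝ}
    (hh : UniformConvexOn K φ h) {u v : E} (hu : u ∈ K) (hv : v ∈ K) (hmin : IsMinOn h K u) :
    h u + φ ‖u - v‖ ≤ h v := by
  have segment_bound : ∀ t ∈ Set.Ioo (0 : ℝ) 1, h u + (1 - t) * φ ‖u - v‖ ≤ h v := by
    rintro t ⟨ht₀, ht₁⟩
    have hst : 1 - t + t = 1 := sub_add_cancel 1 t
    have hmin_t : h u ≤ h ((1 - t) • u + t • v) :=
      hmin (hh.1 hu hv (sub_nonneg.2 ht₁.le) ht₀.le hst)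
    have hconv := hh.2 hu hv (sub_nonneg.2 ht₁.le) ht₀.le hst
    simp only [smul_eq_mul] at hconv
    refine le_of_mul_le_mul_left ?_ ht₀
    linarith
  have hlim : Tendsto (fun t : ℝ ↦ h u + (1 - t) * φ ‖u - v‖) (𝓝[>] 0) (𝓝 (h u + φ ‖u - v‖)) :=
    (Continuous.tendsto' (by fun_prop) 0 _ (by simp)).mono_left nhdsWithin_le_nhds
  exact le_of_tendsto hlim (eventually_of_mem (Ioo_mem_nhdsGT one_pos) segment_bound)

end NormedSpace

section InnerProductSpace

variable {E : Type*} [NormedAddCommGroup E] [InnerProductSpace ℝ E] {K : Set E}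

theorem strongConvexOn_of_forall_subgradient {h : E → ℝ} {g : E → E} {m : ℝ} (hK : Convex ℝ K)
    (hg : ∀ x ∈ K, ∀ y ∈ K, h x + ⟪g x, y - x⟫ + m / 2 * ‖y - x‖ ^ 2 ≤ h y) :
    StrongConvexOn K m h := by
  refine ⟨hK, fun x hx y hy a b ha hb hab ↦ ?_⟩
  obtain rfl : b = 1 - a := by linarith
  set w := a • x + (1 - a) • y with w_def
  have hw : w ∈ K := hK hx hy ha hb hab
  have hxw : x - w = (1 - a) • (x - y) := by rw [w_def]; module
  have hyw : y - w = (-a) • (x - y) := by rw [w_def]; module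
  have hx_bound := hg w hw x hx
  have hy_bound := hg w hw y hy
  rw [hxw, real_inner_smul_right, norm_smul, mul_pow, Real.norm_eq_abs, sq_abs] at hx_bound
  rw [hyw, real_inner_smul_right, norm_smul, mul_pow, Real.norm_eq_abs, sq_abs] at hy_bound
  have hsum := add_le_add (mul_le_mul_of_nonneg_left hx_bound ha)
    (mul_le_mul_of_nonneg_left hy_bound hb)
  simp only [smul_eq_mul]
  linarith

theorem strongConvexOn_add_inner {h : E → ℝ} {m : ℝ} (hh : StrongConvexOn K m h) (a : E) :
    StrongConvexOn K m fun x ↦ h x + ⟪a, x⟫ := by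
  have hinner : UniformConvexOn K 0 fun x ↦ ⟪a, x⟫ :=
    ((innerₗ E a).convexOn hh.1).uniformConvexOn_zero
  simpa only [StrongConvexOn, add_zero] using! hh.add hinner

theorem norm_sub_le_of_isMinOn_add_inner {h : E → ℝ} {σ : ℝ} (hσ : 0 < σ)
    (hh : StrongConvexOn K σ h) {a b u v : E} (hu : u ∈ K) (hv : v ∈ K)
    (humin : IsMinOn (fun x ↦ h x + ⟪a, x⟫) K u) (hvmin : IsMinOn (fun x ↦ h x + ⟪b, x⟫) K v) :
    ‖u - v‖ ≤ ‖a - b‖ / σ := by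
  have growth_u := add_modulus_le_of_isMinOn_of_uniformConvexOn
    (strongConvexOn_add_inner hh a) hu hv humin
  have growth_v := add_modulus_le_of_isMinOn_of_uniformConvexOn
    (strongConvexOn_add_inner hh b) hv hu hvmin
  rw [norm_sub_rev v u] at growth_v
  rw [le_div_iff₀' hσ]
  obtain huv | huv := (norm_nonneg (u - v)).eq_or_lt
  · simp [← huv]
  refine le_of_mul_le_mul_right ?_ huv
  calc σ * ‖u - v‖ * ‖u - v‖ ≤ ⟪a - b, v - u⟫ := by
        simp only [inner_sub_left, inner_sub_right]
        linarith
    _ ≤ ‖a - b‖ * ‖v - u‖ := real_inner_le_norm _ _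
    _ = ‖a - b‖ * ‖u - v‖ := by rw [norm_sub_rev v u]

theorem isMinOn_add_inner_neg_of_subgradient {h : E → ℝ} {g x : E}
    (hg : ∀ y ∈ K, h x + ⟪g, y - x⟫ ≤ h y) : IsMinOn (fun y ↦ h y + ⟪-g, y⟫) K x := by
  refine isMinOn_iff.2 fun y hy ↦ ?_
  have hxy := hg y hy
  rw [inner_sub_right] at hxy
  simp only [inner_neg_left]
  linarith

theorem isMinOn_add_inner_add_norm_sub_sq_iff {f : E → ℝ} {ρ : ℝ} {lam z x : E} :
    IsMinOn (fun y ↦ f y + ⟪lam, y⟫ + ρ / 2 * ‖y - z‖ ^ 2) K x ↔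
      IsMinOn (fun y ↦ f y + ρ / 2 * ‖y‖ ^ 2 + ⟪lam - ρ • z, y⟫) K x := by
  have hexpand : ∀ y, f y + ⟪lam, y⟫ + ρ / 2 * ‖y - z‖ ^ 2 =
      f y + ρ / 2 * ‖y‖ ^ 2 + ⟪lam - ρ • z, y⟫ + ρ / 2 * ‖z‖ ^ 2 := fun y ↦ by
    rw [norm_sub_sq_real, inner_sub_left, real_inner_smul_left, real_inner_comm z y]
    ring
  simp only [isMinOn_iff, hexpand, add_le_add_iff_right]

-- `g` stands in for `∇f(z*)`: `g + ρ z*` is a subgradient of `f + (ρ/2)‖·‖²` relative to `K`.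
theorem stmt_13_general {f : E → ℝ} {ρ σ : ℝ} (hσ : 0 < σ)
    (hf : StrongConvexOn K σ fun x ↦ f x + ρ / 2 * ‖x‖ ^ 2)
    {z zstar lam lamstar g xp : E} (hzstar : zstar ∈ K) (hxp : xp ∈ K)
    (hg : ∀ y ∈ K, f zstar + ρ / 2 * ‖zstar‖ ^ 2 + ⟪g + ρ • zstar, y - zstar⟫
      ≤ f y + ρ / 2 * ‖y‖ ^ 2)
    (hstat : g + lamstar = 0)
    (hmin : IsMinOn (fun x ↦ f x + ⟪lam, x⟫ + ρ / 2 * ‖x - z‖ ^ 2) K xp) :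
    ‖xp - zstar‖ ≤ |ρ| / σ * ‖z - zstar‖ + 1 / σ * ‖lam - lamstar‖ := by
  have hzstar_min := isMinOn_add_inner_neg_of_subgradient
    (h := fun x ↦ f x + ρ / 2 * ‖x‖ ^ 2) hg
  rw [isMinOn_add_inner_add_norm_sub_sq_iff] at hmin
  obtain rfl : g = -lamstar := eq_neg_of_add_eq_zero_left hstat
  calc ‖xp - zstar‖ ≤ ‖lam - ρ • z - -(-lamstar + ρ • zstar)‖ / σ :=
        norm_sub_le_of_isMinOn_add_inner hσ hf hxp hzstar hmin hzstar_min
    _ = ‖(lam - lamstar) - ρ • (z - zstar)‖ / σ := by congr 2; module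
    _ ≤ (‖lam - lamstar‖ + |ρ| * ‖z - zstar‖) / σ := by
        gcongr
        simpa only [norm_smul, Real.norm_eq_abs] using
          norm_sub_le (lam - lamstar) (ρ • (z - zstar))
    _ = |ρ| / σ * ‖z - zstar‖ + 1 / σ * ‖lam - lamstar‖ := by ring

end InnerProductSpace

/-- Let `f : ℝⁿ → ℝ` be differentiable and `ρ, σ > 0` such that
`x ↦ f(x) + (ρ/2)‖x‖²` is `σ`-strongly convex. Let `∇f(z*) + λ* = 0` and let `x⁺` be the
global minimizer of `x ↦ f(x) + λᵀx + (ρ/2)‖x − z‖²`. Then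
`‖x⁺ − z*‖ ≤ (ρ/σ)‖z − z*‖ + (1/σ)‖λ − λ*‖`. -/
theorem stmt_13 {n : ℕ}
    (f : EuclideanSpace ℝ (Fin n) → ℝ)
    (gradf : EuclideanSpace ℝ (Fin n) → EuclideanSpace ℝ (Fin n))
    (hgrad : ∀ x, HasGradientAt f (gradf x) x)
    (ρ σ : ℝ) (hρ : 0 < ρ) (hσ : 0 < σ)
    -- x ↦ f(x) + (ρ/2)‖x‖² is σ-strongly convex (its gradient is ∇f(x) + ρx)
    (hsc : ∀ x y, f x + ρ / 2 * ‖x‖ ^ 2 + ⟪gradf x + ρ • x, y - x⟫ + σ / 2 * ‖y - x‖ ^ 2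
        ≤ f y + ρ / 2 * ‖y‖ ^ 2)
    (z zstar lam lamstar : EuclideanSpace ℝ (Fin n))
    (hstat : gradf zstar + lamstar = 0)
    (xp : EuclideanSpace ℝ (Fin n))
    (hxp : ∀ x, f xp + ⟪lam, xp⟫ + ρ / 2 * ‖xp - z‖ ^ 2
        ≤ f x + ⟪lam, x⟫ + ρ / 2 * ‖x - z‖ ^ 2) :
    ‖xp - zstar‖ ≤ ρ / σ * ‖z - zstar‖ + 1 / σ * ‖lam - lamstar‖ := by
  simpa only [abs_of_pos hρ] using stmt_13_general hσ
    (strongConvexOn_of_forall_subgradient convex_univ fun x _ y _ ↦ hsc x y)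
    (Set.mem_univ _) (Set.mem_univ _)
    (fun y _ ↦ (le_add_of_nonneg_right (by positivity)).trans (hsc zstar y)) hstat
    (isMinOn_univ_iff.2 hxp)
end

section
/- Let N ≥ 1 and ρ, σ, γ > 0 with c := (ρ + 1)γ/σ < 1. Let z*, λ_1*, …, λ_N* ∈ ℝⁿ and let sequences z^k, λ_i^k, x_i^{k+1} ∈ ℝⁿ (k = 0, 1, 2, …) satisfy, for every k: (a) σ‖x_i^{k+1} − z*‖ ≤ ρ‖z^k − z*‖ + ‖λ_i^k − λ_i*‖ for every i; (b) N‖z^{k+1} − z*‖ ≤ γ Σ_{i=1}^N ‖x_i^{k+1} − z*‖; and (c) Σ_{i=1}^N ‖λ_i^{k+1} − λ_i*‖ ≤ γ Σ_{i=1}^N ‖x_i^{k+1} − z*‖. Define V^k = (ρN/σ)‖z^k − z*‖ + (1/σ) Σ_{i=1}^N ‖λ_i^k − λ_i*‖. Then V^k ≤ c^k V^0 for all k; in particular z^k → z* and λ_i^k → λ_i* for every i, at a linear rate. -/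
open Finset

/-! The merit `V = (ρN/σ) dist z z* + (1/σ) Σᵢ dist λᵢ λᵢ*` is chosen so that summing the local
stability bounds (a) gives `Σᵢ dist xᵢ z* ≤ V`. The bounds (b) and (c) on the new consensus
point and multipliers, weighted by `ρ/σ` and `1/σ`, add up to
`V⁺ ≤ ((ρ + 1)γ/σ) Σᵢ dist xᵢ z*`. Hence one iteration contracts `V` by `c = (ρ + 1)γ/σ`, and
`V` in turn controls both distances. -/

section ConsensusMerit

variable {ι X Y : Type*} [Fintype ι] [PseudoMetricSpace X] [PseudoMetricSpace Y]

/-- The Lyapunov function of Consensus ALADIN at the consensus point `z` and multipliers `lam`,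
measuring their weighted distance to the primal-dual solution `(zstar, lamstar)`. The number `N`
of agents is the cardinality of `ι`. -/
noncomputable def consensusMerit (ρ σ : ℝ) (zstar : X) (lamstar : ι → Y) (z : X) (lam : ι → Y) :
    ℝ :=
  ρ * Fintype.card ι / σ * dist z zstar + 1 / σ * ∑ i, dist (lam i) (lamstar i)

variable {ρ σ γ : ℝ} {zstar z z' : X} {lamstar lam lam' : ι → Y} {x : ι → X}

lemma consensusMerit_nonneg (hρ : 0 ≤ ρ) (hσ : 0 ≤ σ) :
    0 ≤ consensusMerit ρ σ zstar lamstar z lam := by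
  unfold consensusMerit
  positivity

lemma sum_dist_le_consensusMerit (hσ : 0 < σ)
    (ha : ∀ i, σ * dist (x i) zstar ≤ ρ * dist z zstar + dist (lam i) (lamstar i)) :
    ∑ i, dist (x i) zstar ≤ consensusMerit ρ σ zstar lamstar z lam :=
  calc ∑ i, dist (x i) zstar
      ≤ ∑ i, (ρ * dist z zstar + dist (lam i) (lamstar i)) / σ :=
        sum_le_sum fun i _ ↦ (le_div_iff₀' hσ).2 (ha i)
    _ = consensusMerit ρ σ zstar lamstar z lam := by
        rw [← sum_div, sum_add_distrib, sum_const, card_univ, nsmul_eq_mul, consensusMerit]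
        ring

lemma consensusMerit_le_mul_sum_dist (hρ : 0 ≤ ρ) (hσ : 0 ≤ σ)
    (hb : Fintype.card ι * dist z' zstar ≤ γ * ∑ i, dist (x i) zstar)
    (hc : ∑ i, dist (lam' i) (lamstar i) ≤ γ * ∑ i, dist (x i) zstar) :
    consensusMerit ρ σ zstar lamstar z' lam' ≤ (ρ + 1) * γ / σ * ∑ i, dist (x i) zstar :=
  calc consensusMerit ρ σ zstar lamstar z' lam'
      = ρ / σ * (Fintype.card ι * dist z' zstar)
          + 1 / σ * ∑ i, dist (lam' i) (lamstar i) := by rw [consensusMerit]; ring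
    _ ≤ ρ / σ * (γ * ∑ i, dist (x i) zstar) + 1 / σ * (γ * ∑ i, dist (x i) zstar) := by gcongr
    _ = (ρ + 1) * γ / σ * ∑ i, dist (x i) zstar := by ring

lemma consensusMerit_le_mul_consensusMerit (hρ : 0 ≤ ρ) (hσ : 0 < σ) (hγ : 0 ≤ γ)
    (ha : ∀ i, σ * dist (x i) zstar ≤ ρ * dist z zstar + dist (lam i) (lamstar i))
    (hb : Fintype.card ι * dist z' zstar ≤ γ * ∑ i, dist (x i) zstar)
    (hc : ∑ i, dist (lam' i) (lamstar i) ≤ γ * ∑ i, dist (x i) zstar) :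
    consensusMerit ρ σ zstar lamstar z' lam'
      ≤ (ρ + 1) * γ / σ * consensusMerit ρ σ zstar lamstar z lam :=
  (consensusMerit_le_mul_sum_dist hρ hσ.le hb hc).trans <|
    mul_le_mul_of_nonneg_left (sum_dist_le_consensusMerit hσ ha) (by positivity)

lemma dist_le_mul_consensusMerit [Nonempty ι] (hρ : 0 < ρ) (hσ : 0 < σ) :
    dist z zstar ≤ σ / (ρ * Fintype.card ι) * consensusMerit ρ σ zstar lamstar z lam :=
  calc dist z zstar
      = σ / (ρ * Fintype.card ι) * (ρ * Fintype.card ι / σ * dist z zstar) := by field_simp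
    _ ≤ σ / (ρ * Fintype.card ι) * consensusMerit ρ σ zstar lamstar z lam := by
        gcongr
        exact le_add_of_nonneg_right (by positivity)

lemma dist_multiplier_le_mul_consensusMerit (hρ : 0 ≤ ρ) (hσ : 0 < σ) (i : ι) :
    dist (lam i) (lamstar i) ≤ σ * consensusMerit ρ σ zstar lamstar z lam :=
  calc dist (lam i) (lamstar i)
      ≤ ∑ j, dist (lam j) (lamstar j) :=
        single_le_sum (f := fun j ↦ dist (lam j) (lamstar j)) (fun _ _ ↦ dist_nonneg) (mem_univ i)
    _ = σ * (1 / σ * ∑ j, dist (lam j) (lamstar j)) := by field_simp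
    _ ≤ σ * consensusMerit ρ σ zstar lamstar z lam := by
        gcongr
        exact le_add_of_nonneg_left (by positivity)

lemma tendsto_of_tendsto_consensusMerit_zero [Nonempty ι] {α : Type*} {l : Filter α} {z : α → X}
    {lam : α → ι → Y} (hρ : 0 < ρ) (hσ : 0 < σ)
    (h : Filter.Tendsto (fun k ↦ consensusMerit ρ σ zstar lamstar (z k) (lam k)) l (nhds 0)) :
    Filter.Tendsto z l (nhds zstar)
      ∧ ∀ i, Filter.Tendsto (fun k ↦ lam k i) l (nhds (lamstar i)) := by
  have h_mul (C : ℝ) : Filter.Tendsto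
      (fun k ↦ C * consensusMerit ρ σ zstar lamstar (z k) (lam k)) l (nhds 0) := by
    simpa only [mul_zero] using h.const_mul C
  refine ⟨tendsto_iff_dist_tendsto_zero.2 ?_, fun i ↦ tendsto_iff_dist_tendsto_zero.2 ?_⟩
  · exact squeeze_zero (fun _ ↦ dist_nonneg) (fun _ ↦ dist_le_mul_consensusMerit hρ hσ) (h_mul _)
  · exact squeeze_zero (fun _ ↦ dist_nonneg)
      (fun _ ↦ dist_multiplier_le_mul_consensusMerit hρ.le hσ i) (h_mul _)

theorem stmt_15_general [Nonempty ι] (hρ : 0 < ρ) (hσ : 0 < σ) (hγ : 0 ≤ γ)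
    (hc1 : (ρ + 1) * γ / σ < 1) {z : ℕ → X} {lam : ℕ → ι → Y} {x : ℕ → ι → X}
    (ha : ∀ k i, σ * dist (x (k + 1) i) zstar
      ≤ ρ * dist (z k) zstar + dist (lam k i) (lamstar i))
    (hb : ∀ k, Fintype.card ι * dist (z (k + 1)) zstar ≤ γ * ∑ i, dist (x (k + 1) i) zstar)
    (hc : ∀ k, ∑ i, dist (lam (k + 1) i) (lamstar i) ≤ γ * ∑ i, dist (x (k + 1) i) zstar) :
    (∀ k, consensusMerit ρ σ zstar lamstar (z k) (lam k)
      ≤ ((ρ + 1) * γ / σ) ^ k * consensusMerit ρ σ zstar lamstar (z 0) (lam 0))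
    ∧ Filter.Tendsto z Filter.atTop (nhds zstar)
    ∧ ∀ i, Filter.Tendsto (fun k ↦ lam k i) Filter.atTop (nhds (lamstar i)) := by
  set V : ℕ → ℝ := fun k ↦ consensusMerit ρ σ zstar lamstar (z k) (lam k)
  have hc0 : 0 ≤ (ρ + 1) * γ / σ := by positivity
  have h_geom (k : ℕ) : V k ≤ ((ρ + 1) * γ / σ) ^ k * V 0 :=
    le_geom hc0 k fun j _ ↦
      consensusMerit_le_mul_consensusMerit hρ.le hσ hγ (ha j) (hb j) (hc j)
  have h_bound : Filter.Tendsto (fun k ↦ ((ρ + 1) * γ / σ) ^ k * V 0) Filter.atTop (nhds 0) := by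
    simpa only [zero_mul] using (tendsto_pow_atTop_nhds_zero_of_lt_one hc0 hc1).mul_const (V 0)
  have h_merit : Filter.Tendsto V Filter.atTop (nhds 0) :=
    squeeze_zero (fun _ ↦ consensusMerit_nonneg hρ.le hσ.le) h_geom h_bound
  exact ⟨h_geom, tendsto_of_tendsto_consensusMerit_zero hρ hσ h_merit⟩

end ConsensusMerit

/-- Let `N ≥ 1`, `ρ, σ, γ > 0` with `c := (ρ + 1)γ/σ < 1`, and let
sequences `z^k, λᵢ^k, xᵢ^{k+1}` satisfy, for every `k`:
(a) `σ‖xᵢ^{k+1} − z*‖ ≤ ρ‖z^k − z*‖ + ‖λᵢ^k − λᵢ*‖` for every `i`;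
(b) `N‖z^{k+1} − z*‖ ≤ γ Σᵢ ‖xᵢ^{k+1} − z*‖`;
(c) `Σᵢ ‖λᵢ^{k+1} − λᵢ*‖ ≤ γ Σᵢ ‖xᵢ^{k+1} − z*‖`.
With `V^k = (ρN/σ)‖z^k − z*‖ + (1/σ) Σᵢ ‖λᵢ^k − λᵢ*‖`, we have `V^k ≤ c^k V^0` for all `k`;
in particular `z^k → z*` and `λᵢ^k → λᵢ*` for every `i` (at a linear rate). -/
theorem stmt_15 {n N : ℕ} (hN : 0 < N)
    (ρ σ γ c : ℝ) (hρ : 0 < ρ) (hσ : 0 < σ) (hγ : 0 < γ)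
    (hc : c = (ρ + 1) * γ / σ) (hc1 : c < 1)
    (zstar : EuclideanSpace ℝ (Fin n))
    (lamstar : Fin N → EuclideanSpace ℝ (Fin n))
    (z : ℕ → EuclideanSpace ℝ (Fin n))
    (lam : ℕ → Fin N → EuclideanSpace ℝ (Fin n))
    (x : ℕ → Fin N → EuclideanSpace ℝ (Fin n))
    (ha : ∀ k i, σ * ‖x (k + 1) i - zstar‖ ≤ ρ * ‖z k - zstar‖ + ‖lam k i - lamstar i‖)
    (hb : ∀ k, (N : ℝ) * ‖z (k + 1) - zstar‖ ≤ γ * ∑ i, ‖x (k + 1) i - zstar‖)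
    (hcc : ∀ k, ∑ i, ‖lam (k + 1) i - lamstar i‖ ≤ γ * ∑ i, ‖x (k + 1) i - zstar‖)
    (V : ℕ → ℝ)
    (hV : ∀ k, V k = ρ * N / σ * ‖z k - zstar‖ + 1 / σ * ∑ i, ‖lam k i - lamstar i‖) :
    (∀ k, V k ≤ c ^ k * V 0)
    ∧ Filter.Tendsto z Filter.atTop (nhds zstar)
    ∧ ∀ i, Filter.Tendsto (fun k => lam k i) Filter.atTop (nhds (lamstar i)) := by
  have : NeZero N := ⟨hN.ne'⟩
  obtain rfl : V = _ := funext hV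
  subst hc
  simp only [← dist_eq_norm] at ha hb hcc ⊢
  simpa only [consensusMerit, Fintype.card_fin] using
    stmt_15_general hρ hσ hγ.le hc1 ha (by simpa only [Fintype.card_fin] using hb) hcc
end

section
/- Let ρ > 0 and x_1, …, x_N, λ_1, …, λ_N ∈ ℝⁿ with N ≥ 1. The function z ↦ Σ_{i=1}^N ((ρ/2)‖x_i − z‖² − λ_iᵀ z) has unique global minimizer z̄ = (1/N) Σ_{i=1}^N (x_i + λ_i/ρ). In particular, if λ_i = −g_i for given g_1, …, g_N ∈ ℝⁿ, then z̄ = (1/N) Σ_{i=1}^N (x_i − g_i/ρ), so the Consensus ADMM global aggregation step coincides with the Reduced Consensus ALADIN global update. -/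
open Matrix Finset

/-!
Completing the square in each summand turns the objective, up to a constant, into
`ρ / 2` times the sum of the squared distances from `z` to the shifted points `xᵢ + λᵢ / ρ`.
By the parallel axis identity that sum exceeds its value at the mean of these points by exactly
`N` times the squared distance from `z` to the mean.
-/

section BilinForm

variable {R M ι : Type*} [CommRing R] [AddCommGroup M] [Module R M] {B : LinearMap.BilinForm R M}

theorem parallel_axis (hB : B.IsSymm) {s : Finset ι} {y : ι → M} {m : M}
    (hm : ∑ i ∈ s, (y i - m) = 0) (z : M) :
    ∑ i ∈ s, B (y i - z) (y i - z) =
      ∑ i ∈ s, B (y i - m) (y i - m) + #s * B (z - m) (z - m) := by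
  have expand (i : ι) : B (y i - z) (y i - z) =
      B (y i - m) (y i - m) + B (z - m) (z - m) - 2 * B (y i - m) (z - m) := by
    simp only [map_sub, LinearMap.sub_apply, hB.eq z (y i), hB.eq m (y i), hB.eq m z]
    ring
  have cross_terms_vanish : ∑ i ∈ s, B (y i - m) (z - m) = 0 := by
    rw [← LinearMap.BilinForm.sum_left, hm, LinearMap.BilinForm.zero_left]
  simp only [expand, sum_sub_distrib, sum_add_distrib, ← mul_sum, cross_terms_vanish, sum_const,
    nsmul_eq_mul, mul_zero, sub_zero]

end BilinForm

theorem sum_sub_card_inv_smul_sum (K : Type*) {E ι : Type*} [DivisionRing K] [CharZero K]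
    [AddCommGroup E] [Module K E] [Fintype ι] (y : ι → E) :
    ∑ i, (y i - (Fintype.card ι : K)⁻¹ • ∑ j, y j) = 0 := by
  rw [sum_sub_distrib, sum_const, card_univ, ← Nat.cast_smul_eq_nsmul K]
  cases isEmpty_or_nonempty ι
  · simp
  · rw [smul_inv_smul₀ (Nat.cast_ne_zero.mpr Fintype.card_ne_zero), sub_self]

section Consensus

variable {K E ι : Type*} [Field K] [AddCommGroup E] [Module K E] [Fintype ι]

/-- The objective `z ↦ ∑ᵢ ((ρ / 2) ‖xᵢ - z‖² - ⟪λᵢ, z⟫)` of the Consensus ADMM aggregation step,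
with the inner product replaced by a bilinear form `B`. -/
def admmObjective (B : LinearMap.BilinForm K E) (ρ : K) (x lam : ι → E) (z : E) : K :=
  ∑ i, (ρ / 2 * B (x i - z) (x i - z) - B (lam i) z)

/-- The mean of the shifted points `xᵢ + λᵢ / ρ`, the closed form of the Consensus ADMM
aggregation step. -/
def admmAggregate (ρ : K) (x lam : ι → E) : E :=
  (Fintype.card ι : K)⁻¹ • ∑ i, (x i + ρ⁻¹ • lam i)

/-- The Reduced Consensus ALADIN global update, the mean of the points `xᵢ - gᵢ / ρ`. -/
def aladinUpdate (ρ : K) (x g : ι → E) : E :=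
  (Fintype.card ι : K)⁻¹ • ∑ i, (x i - ρ⁻¹ • g i)

theorem admmAggregate_neg (ρ : K) (x g : ι → E) :
    admmAggregate ρ x (-g) = aladinUpdate ρ x g := by
  simp only [admmAggregate, aladinUpdate, Pi.neg_apply, smul_neg, sub_eq_add_neg]

variable {B : LinearMap.BilinForm K E} {ρ : K}

theorem completing_the_square [NeZero (2 : K)] (hB : B.IsSymm) (hρ : ρ ≠ 0) (a l z : E) :
    ρ / 2 * B (a - z) (a - z) - B l z =
      ρ / 2 * B (a + ρ⁻¹ • l - z) (a + ρ⁻¹ • l - z) - (B l a + (2 * ρ)⁻¹ * B l l) := by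
  rw [add_sub_right_comm]
  simp only [map_add, map_sub, map_smul, LinearMap.add_apply, LinearMap.sub_apply,
    LinearMap.smul_apply, smul_eq_mul, hB.eq a l, hB.eq z l]
  field

theorem admmObjective_eq_add [CharZero K] (hB : B.IsSymm) (hρ : ρ ≠ 0) (x lam : ι → E) (z : E) :
    admmObjective B ρ x lam z =
      admmObjective B ρ x lam (admmAggregate ρ x lam) + ρ / 2 * (Fintype.card ι *
        B (z - admmAggregate ρ x lam) (z - admmAggregate ρ x lam)) := by
  simp only [admmObjective, completing_the_square hB hρ, sum_sub_distrib, ← mul_sum]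
  rw [parallel_axis hB (sum_sub_card_inv_smul_sum K _) z, card_univ, ← admmAggregate]
  ring

end Consensus

section Ordered

variable {K E ι : Type*} [Field K] [LinearOrder K] [IsStrictOrderedRing K]
  [AddCommGroup E] [Module K E] [Fintype ι] [Nonempty ι] {B : LinearMap.BilinForm K E} {ρ : K}

theorem admmObjective_admmAggregate_lt (hB : B.IsSymm) (hpos : B.toQuadraticMap.PosDef)
    (hρ : 0 < ρ) (x lam : ι → E) {z : E} (hz : z ≠ admmAggregate ρ x lam) :
    admmObjective B ρ x lam (admmAggregate ρ x lam) < admmObjective B ρ x lam z := by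
  rw [admmObjective_eq_add hB hρ.ne' x lam z]
  have card_pos : (0 : K) < Fintype.card ι := Nat.cast_pos.mpr Fintype.card_pos
  exact lt_add_of_pos_right _ <|
    mul_pos (half_pos hρ) (mul_pos card_pos (hpos _ (sub_ne_zero.mpr hz)))

theorem stmt_16_general (hB : B.IsSymm) (hpos : B.toQuadraticMap.PosDef) (hρ : 0 < ρ)
    (x lam : ι → E) :
    (∀ z, admmObjective B ρ x lam (admmAggregate ρ x lam) ≤ admmObjective B ρ x lam z)
    ∧ (∀ z, admmObjective B ρ x lam z ≤ admmObjective B ρ x lam (admmAggregate ρ x lam) →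
        z = admmAggregate ρ x lam)
    ∧ ∀ g : ι → E, (∀ i, lam i = -g i) → admmAggregate ρ x lam = aladinUpdate ρ x g := by
  refine ⟨fun z => ?_, fun z hz => ?_, fun g hg => ?_⟩
  · obtain rfl | hz := eq_or_ne z (admmAggregate ρ x lam)
    · exact le_rfl
    · exact (admmObjective_admmAggregate_lt hB hpos hρ x lam hz).le
  · by_contra hne
    exact (admmObjective_admmAggregate_lt hB hpos hρ x lam hne).not_ge hz
  · rw [show lam = -g from funext hg, admmAggregate_neg]

end Ordered

section DotProduct

variable {R m : Type*} [Fintype m]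

theorem isSymm_dotProductBilin [CommSemiring R] :
    LinearMap.BilinForm.IsSymm (dotProductBilin R R : LinearMap.BilinForm R (m → R)) :=
  ⟨dotProduct_comm⟩

theorem posDef_dotProductBilin [CommRing R] [LinearOrder R] [IsStrictOrderedRing R] :
    (LinearMap.BilinMap.toQuadraticMap
      (dotProductBilin R R : LinearMap.BilinForm R (m → R))).PosDef := fun v hv =>
  (Fintype.sum_nonneg fun i => mul_self_nonneg (v i)).lt_of_ne'
    (dotProduct_self_eq_zero.not.mpr hv)

end DotProduct

/-- For `ρ > 0` and `x₁, …, x_N, λ₁, …, λ_N ∈ ℝⁿ` (`N ≥ 1`), the function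
`z ↦ Σᵢ ((ρ/2)‖xᵢ − z‖² − λᵢᵀ z)` has unique global minimizer
`z̄ = (1/N) Σᵢ (xᵢ + λᵢ/ρ)`. In particular, if `λᵢ = −gᵢ` then
`z̄ = (1/N) Σᵢ (xᵢ − gᵢ/ρ)`: the Consensus ADMM aggregation step coincides with the
Reduced Consensus ALADIN global update. -/
theorem stmt_16 {n N : ℕ} (hN : 0 < N) (ρ : ℝ) (hρ : 0 < ρ)
    (x lam : Fin N → Fin n → ℝ)
    (φ : (Fin n → ℝ) → ℝ)
    (hφ : ∀ z, φ z = ∑ i, (ρ / 2 * ((x i - z) ⬝ᵥ (x i - z)) - lam i ⬝ᵥ z))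
    (zbar : Fin n → ℝ)
    (hzbar : zbar = ((N : ℝ)⁻¹) • ∑ i, (x i + ρ⁻¹ • lam i)) :
    (∀ z, φ zbar ≤ φ z)
    ∧ (∀ z, φ z ≤ φ zbar → z = zbar)
    ∧ ∀ g : Fin N → Fin n → ℝ, (∀ i, lam i = -g i) →
        zbar = ((N : ℝ)⁻¹) • ∑ i, (x i - ρ⁻¹ • g i) := by
  have : Nonempty (Fin N) := Fin.pos_iff_nonempty.mp hN
  obtain rfl : φ = admmObjective (dotProductBilin ℝ ℝ) ρ x lam := funext hφ
  obtain rfl : zbar = admmAggregate ρ x lam := by rw [hzbar, admmAggregate, Fintype.card_fin]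
  simpa only [aladinUpdate, Fintype.card_fin] using
    stmt_16_general isSymm_dotProductBilin posDef_dotProductBilin hρ x lam
end
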